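/- Let 0 < ε < 1 and run Algorithm 1 with step sizes α = μ = ε and λ_1 = 0. Let P* ∈ P(R) satisfy the per-slot constraints E_{P*}[C(·, b^t)] ≤ v for every t ≥ 0. Then for every integer T ≥ (1/ε)³, the time-averaged regret satisfies (1/T) Σ_{t=1}^{T} ( E_{P^t}[C_R] − E_{P*}[C_R] ) ≤ ε ( (4Θ² + v²)/2 + |R|Θ²/2 + 2Θ + 1 ). -/

import Mathlib

open Finset

/-!
The proof is a drift-plus-penalty analysis. The proximal objective is strongly convex, so its value
at a competitor `u` exceeds the minimum by at least `‖u - x (n + 1)‖² / (2α)`; for feasible `u` the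
constraint term of `u` is nonpositive. Squaring the dual update bounds the growth of `lam²` by
`2 * μ * lam n * g + μ² * g²`, with `g` the constraint value at the new iterate. In the sum of the
two estimates the terms `lam n * g` cancel, and each round's regret is at most a constant of order
`μ` plus the decrease of the potential `lam² / (2μ) + ‖u - x‖² / (2α)`, which telescopes.
-/

section Prox

open Filter Topology

variable {E : Type*} [NormedAddCommGroup E] {s : Set E} {p q : E}

lemma add_le_of_uniformConvexOn_of_isMinOn [NormedSpace ℝ E] {φ : ℝ → ℝ} {F : E → ℝ}
    (hF : UniformConvexOn s φ F) (hp : p ∈ s) (hmin : IsMinOn F s p) (hq : q ∈ s) :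
    F p + φ ‖q - p‖ ≤ F q := by
  have hsegment : ∀ r ∈ Set.Ioo (0 : ℝ) 1, (1 - r) * φ ‖q - p‖ ≤ F q - F p := by
    rintro r ⟨hr0, hr1⟩
    have hmem : r • q + (1 - r) • p ∈ s :=
      hF.1 hq hp hr0.le (sub_nonneg.2 hr1.le) (add_sub_cancel r 1)
    have hle : F p ≤ r * F q + (1 - r) * F p - r * (1 - r) * φ ‖q - p‖ :=
      (hmin hmem).trans (hF.2 hq hp hr0.le (sub_nonneg.2 hr1.le) (add_sub_cancel r 1))
    refine le_of_mul_le_mul_left ?_ hr0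
    linarith
  have hlim : Tendsto (fun r : ℝ ↦ (1 - r) * φ ‖q - p‖) (𝓝[>] 0) (𝓝 (φ ‖q - p‖)) :=
    (Continuous.tendsto' (by fun_prop) 0 _ (by simp)).mono_left nhdsWithin_le_nhds
  have hφ : φ ‖q - p‖ ≤ F q - F p :=
    le_of_tendsto hlim (eventually_of_mem (Ioo_mem_nhdsGT one_pos) hsegment)
  linarith

variable [InnerProductSpace ℝ E] {h : E → ℝ}

lemma strongConvexOn_add_mul_norm_sub_sq (hh : ConvexOn ℝ s h) (k : ℝ) (c : E) :
    StrongConvexOn s (2 * k) (fun y ↦ h y + k * ‖y - c‖ ^ 2) := by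
  rw [strongConvexOn_iff_convex]
  have haffine : ConvexOn ℝ s (fun y ↦ (-(2 * k) • innerₛₗ ℝ c) y + k * ‖c‖ ^ 2) :=
    (LinearMap.convexOn _ hh.1).add_const _
  refine (hh.add haffine).congr fun y _ ↦ ?_
  simp only [Pi.add_apply, LinearMap.smul_apply, innerₛₗ_apply_apply, smul_eq_mul,
    norm_sub_sq_real, real_inner_comm]
  ring

lemma add_mul_norm_sub_sq_le_of_isMinOn {k : ℝ} {c : E} (hh : ConvexOn ℝ s h) (hp : p ∈ s)
    (hmin : IsMinOn (fun y ↦ h y + k * ‖y - c‖ ^ 2) s p) (hq : q ∈ s) :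
    h p + k * ‖p - c‖ ^ 2 + k * ‖q - p‖ ^ 2 ≤ h q + k * ‖q - c‖ ^ 2 := by
  simpa only [mul_div_cancel_left₀ k (two_ne_zero' ℝ)] using
    add_le_of_uniformConvexOn_of_isMinOn (strongConvexOn_add_mul_norm_sub_sq hh k c) hp hmin hq

end Prox

/-- A run of the online proximal primal-dual method on the feasible set `K`, with costs `f n`,
constraints `g n ≤ 0`, primal step size `α` and dual step size `μ`. Rounds are indexed from `0`:
`lam n` is the multiplier used to compute `x (n + 1)` from `x n`. -/
structure IsPrimalDualRun {E : Type*} [NormedAddCommGroup E] (K : Set E) (f g : ℕ → E → ℝ)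
    (α μ : ℝ) (x : ℕ → E) (lam : ℕ → ℝ) : Prop where
  mem_succ (n : ℕ) : x (n + 1) ∈ K
  isMinOn_succ (n : ℕ) :
    IsMinOn (fun y ↦ f n y + lam n * g n y + 1 / (2 * α) * ‖y - x n‖ ^ 2) K (x (n + 1))
  dual_succ (n : ℕ) : lam (n + 1) = max 0 (lam n + μ * g n (x (n + 1)))

/-- The Lyapunov function of the primal-dual method relative to the comparator `u`; each
squared distance is weighted by the inverse of its step size. -/
noncomputable def primalDualPotential {E : Type*} [NormedAddCommGroup E] (α μ : ℝ) (u x : E)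
    (l : ℝ) : ℝ :=
  1 / (2 * μ) * l ^ 2 + 1 / (2 * α) * ‖u - x‖ ^ 2

lemma primalDualPotential_nonneg {E : Type*} [NormedAddCommGroup E] {α μ : ℝ} (hα : 0 < α)
    (hμ : 0 < μ) (u x : E) (l : ℝ) : 0 ≤ primalDualPotential α μ u x l := by
  unfold primalDualPotential
  positivity

namespace IsPrimalDualRun

variable {E : Type*} [NormedAddCommGroup E] {K : Set E} {f g : ℕ → E → ℝ} {α μ B : ℝ}
  {x : ℕ → E} {lam : ℕ → ℝ} {u : E}

lemma dual_nonneg (h : IsPrimalDualRun K f g α μ x lam) (h0 : 0 ≤ lam 0) : ∀ n, 0 ≤ lam n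
  | 0 => h0
  | n + 1 => h.dual_succ n ▸ le_max_left _ _

lemma dual_drift_le (h : IsPrimalDualRun K f g α μ x lam) (hμ : 0 < μ) (n : ℕ) :
    1 / (2 * μ) * lam (n + 1) ^ 2 ≤
      1 / (2 * μ) * lam n ^ 2 + lam n * g n (x (n + 1)) + μ / 2 * g n (x (n + 1)) ^ 2 := by
  have hsq : lam (n + 1) ^ 2 ≤ (lam n + μ * g n (x (n + 1))) ^ 2 := by
    rw [h.dual_succ n, sq_le_sq, abs_of_nonneg (le_max_left _ _)]
    exact max_le (abs_nonneg _) (le_abs_self _)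
  calc
    1 / (2 * μ) * lam (n + 1) ^ 2 ≤ 1 / (2 * μ) * (lam n + μ * g n (x (n + 1))) ^ 2 := by gcongr
    _ = _ := by field

variable [InnerProductSpace ℝ E]

lemma sub_le_potential_sub (h : IsPrimalDualRun K f g α μ x lam) (hα : 0 < α) (hμ : 0 < μ)
    (h0 : 0 ≤ lam 0) (hf : ∀ n, ConvexOn ℝ K (f n)) (hg : ∀ n, ConvexOn ℝ K (g n))
    (hB : ∀ n, g n (x (n + 1)) ^ 2 ≤ B) (hu : u ∈ K) (hfeas : ∀ n, g n u ≤ 0) (n : ℕ) :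
    f n (x (n + 1)) - f n u ≤ μ * (B / 2) + (primalDualPotential α μ u (x n) (lam n) -
      primalDualPotential α μ u (x (n + 1)) (lam (n + 1))) := by
  have hlam : 0 ≤ lam n := h.dual_nonneg h0 n
  have hprimal := add_mul_norm_sub_sq_le_of_isMinOn ((hf n).add ((hg n).smul hlam))
    (h.mem_succ n) (h.isMinOn_succ n) hu
  have hdual := h.dual_drift_le hμ n
  have hpenalty : lam n * g n u ≤ 0 := mul_nonpos_of_nonneg_of_nonpos hlam (hfeas n)
  have hmove : 0 ≤ 1 / (2 * α) * ‖x (n + 1) - x n‖ ^ 2 := by positivity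
  have hquad : μ / 2 * g n (x (n + 1)) ^ 2 ≤ μ / 2 * B := by gcongr; exact hB n
  simp only [Pi.add_apply, smul_eq_mul] at hprimal
  unfold primalDualPotential
  linarith

lemma sum_sub_le (h : IsPrimalDualRun K f g α μ x lam) (hα : 0 < α) (hμ : 0 < μ)
    (h0 : 0 ≤ lam 0) (hf : ∀ n, ConvexOn ℝ K (f n)) (hg : ∀ n, ConvexOn ℝ K (g n))
    (hB : ∀ n, g n (x (n + 1)) ^ 2 ≤ B) (hu : u ∈ K) (hfeas : ∀ n, g n u ≤ 0) (T : ℕ) :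
    ∑ n ∈ range T, (f n (x (n + 1)) - f n u) ≤
      T * (μ * (B / 2)) + primalDualPotential α μ u (x 0) (lam 0) := by
  have hpot := primalDualPotential_nonneg hα hμ u (x T) (lam T)
  calc
    _ ≤ ∑ n ∈ range T, (μ * (B / 2) + (primalDualPotential α μ u (x n) (lam n) -
          primalDualPotential α μ u (x (n + 1)) (lam (n + 1)))) :=
      sum_le_sum fun n _ ↦ h.sub_le_potential_sub hα hμ h0 hf hg hB hu hfeas n
    _ = T * (μ * (B / 2)) + (primalDualPotential α μ u (x 0) (lam 0) -
          primalDualPotential α μ u (x T) (lam T)) := by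
      rw [sum_add_distrib, sum_const, card_range, nsmul_eq_mul,
        sum_range_sub' fun n ↦ primalDualPotential α μ u (x n) (lam n)]
    _ ≤ _ := by linarith

end IsPrimalDualRun

theorem stmt13_general {E : Type*} [NormedAddCommGroup E] [InnerProductSpace ℝ E] {K : Set E}
    {f g : ℕ → E → ℝ} {x : ℕ → E} {lam : ℕ → ℝ} {u : E} {ε B : ℝ} {T : ℕ}
    (h : IsPrimalDualRun K f g ε ε x lam) (hε : 0 < ε) (h0 : 0 ≤ lam 0)
    (hf : ∀ n, ConvexOn ℝ K (f n)) (hg : ∀ n, ConvexOn ℝ K (g n))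
    (hB : ∀ n, g n (x (n + 1)) ^ 2 ≤ B) (hu : u ∈ K) (hfeas : ∀ n, g n u ≤ 0)
    (hT : (1 / ε) ^ 2 ≤ T) :
    1 / (T : ℝ) * ∑ n ∈ range T, (f n (x (n + 1)) - f n u) ≤
      ε * (B / 2 + (lam 0 ^ 2 + ‖u - x 0‖ ^ 2) / 2) := by
  have hTpos : (0 : ℝ) < T := lt_of_lt_of_le (by positivity) hT
  have hinit : primalDualPotential ε ε u (x 0) (lam 0) ≤
      T * (ε * ((lam 0 ^ 2 + ‖u - x 0‖ ^ 2) / 2)) := calc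
    _ = (1 / ε) ^ 2 * (ε * ((lam 0 ^ 2 + ‖u - x 0‖ ^ 2) / 2)) := by
      unfold primalDualPotential
      field
    _ ≤ _ := by gcongr
  rw [one_div_mul_eq_div, div_le_iff₀' hTpos]
  linarith [h.sum_sub_le hε hε h0 hf hg hB hu hfeas T]

section ProbSimplex

variable {R : Type*} [Fintype R]

variable (R) in
/-- The probability simplex inside `EuclideanSpace ℝ R`, where the proximal term uses the
Euclidean norm; Mathlib's `stdSimplex` lives in `R → ℝ`, which carries the sup norm. -/
def probSimplex : Set (EuclideanSpace ℝ R) :=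
  {p | (∀ a, 0 ≤ p a) ∧ ∑ a, p a = 1}

lemma convex_probSimplex : Convex ℝ (probSimplex R) :=
  (convex_stdSimplex ℝ R).linear_preimage (WithLp.linearEquiv 2 ℝ (R → ℝ)).toLinearMap

lemma convexOn_sum_mul {s : Set (EuclideanSpace ℝ R)} (hs : Convex ℝ s) (c : R → ℝ) :
    ConvexOn ℝ s (fun p ↦ ∑ a, p a * c a) := by
  refine ⟨hs, fun p _ q _ r t _ _ _ ↦ le_of_eq ?_⟩
  simp only [PiLp.add_apply, PiLp.smul_apply, smul_eq_mul, add_mul, mul_assoc, sum_add_distrib,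
    mul_sum]

lemma sum_mul_mem_Icc_of_mem_probSimplex {p : EuclideanSpace ℝ R} (hp : p ∈ probSimplex R)
    {c : R → ℝ} {m M : ℝ} (hc : ∀ a, c a ∈ Set.Icc m M) : ∑ a, p a * c a ∈ Set.Icc m M :=
  (convex_Icc m M).sum_mem (fun a _ ↦ hp.1 a) hp.2 fun a _ ↦ hc a

lemma sum_mul_sub_sq_le_of_mem_probSimplex {p : EuclideanSpace ℝ R} (hp : p ∈ probSimplex R)
    {c : R → ℝ} {M v : ℝ} (hc : ∀ a, c a ∈ Set.Icc 0 M) (hv : 0 ≤ v) :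
    (∑ a, p a * c a - v) ^ 2 ≤ M ^ 2 + v ^ 2 := by
  obtain ⟨hnonneg, hle⟩ := sum_mul_mem_Icc_of_mem_probSimplex hp hc
  calc
    (∑ a, p a * c a - v) ^ 2 ≤ (∑ a, p a * c a) ^ 2 + v ^ 2 := by
      linarith [sub_sq (∑ a, p a * c a) v, mul_nonneg hnonneg hv]
    _ ≤ M ^ 2 + v ^ 2 := by gcongr

lemma norm_sub_sq_le_two_of_mem_probSimplex {p q : EuclideanSpace ℝ R} (hp : p ∈ probSimplex R)
    (hq : q ∈ probSimplex R) : ‖q - p‖ ^ 2 ≤ 2 := by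
  have hle_one {r : EuclideanSpace ℝ R} (hr : r ∈ probSimplex R) (a : R) : r a ≤ 1 :=
    (mem_Icc_of_mem_stdSimplex hr a).2
  calc
    ‖q - p‖ ^ 2 = ∑ a, (q a - p a) ^ 2 := EuclideanSpace.real_norm_sq_eq _
    _ ≤ ∑ a, (q a + p a) := sum_le_sum fun a _ ↦ by
      nlinarith [hp.1 a, hq.1 a, hle_one hp a, hle_one hq a]
    _ = 2 := by rw [sum_add_distrib, hp.2, hq.2, one_add_one_eq_two]

end ProbSimplex

lemma sum_Icc_one_eq_sum_range {M : Type*} [AddCommMonoid M] (f : ℕ → M) (n : ℕ) :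
    ∑ t ∈ Icc 1 n, f t = ∑ i ∈ range n, f (i + 1) := by
  rw [range_eq_Ico, sum_Ico_add' f 0 n 1, zero_add, Ico_add_one_right_eq_Icc]

theorem stmt13
    {R : Type*} [Fintype R] [Nonempty R]
    (CR : R → ℝ) (CV CT : R → R → ℝ) (Θ v α μ : ℝ)
    (hΘ : 0 < Θ) (hv : 0 < v) (hα : 0 < α) (hμ : 0 < μ)
    (hCR : ∀ a : R, 0 ≤ CR a ∧ CR a ≤ Θ)
    (hCV : ∀ a c : R, 0 ≤ CV a c ∧ CV a c ≤ Θ)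
    (hCT : ∀ a c : R, 0 ≤ CT a c ∧ CT a c ≤ Θ)
    (b : ℕ → R) (P : ℕ → EuclideanSpace ℝ R) (lam : ℕ → ℝ)
    (hP0 : (∀ a : R, 0 ≤ P 0 a) ∧ ∑ a : R, P 0 a = 1)
    (hlam1 : lam 1 = 0)
    (hPmem : ∀ t : ℕ, 1 ≤ t → (∀ a : R, 0 ≤ P t a) ∧ ∑ a : R, P t a = 1)
    (hPmin : ∀ t : ℕ, 1 ≤ t → ∀ Q : EuclideanSpace ℝ R,
      ((∀ a : R, 0 ≤ Q a) ∧ ∑ a : R, Q a = 1) →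
      (∑ a : R, P t a * CR a) +
        lam t * ((∑ a : R, P t a * (CV a (b (t-1)) + CT a (b (t-1)))) - v) +
        (1/(2*α)) * ‖P t - P (t-1)‖^2 ≤
      (∑ a : R, Q a * CR a) +
        lam t * ((∑ a : R, Q a * (CV a (b (t-1)) + CT a (b (t-1)))) - v) +
        (1/(2*α)) * ‖Q - P (t-1)‖^2)
    (hlam : ∀ t : ℕ, 1 ≤ t →
      lam (t+1) = max 0 (lam t + μ * ((∑ a : R, P t a * (CV a (b (t-1)) + CT a (b (t-1)))) - v)))
    (ε : ℝ) (hε0 : 0 < ε) (hε1 : ε < 1) (hαε : α = ε) (hμε : μ = ε)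
    (Pstar : EuclideanSpace ℝ R)
    (hPstar : (∀ a : R, 0 ≤ Pstar a) ∧ ∑ a : R, Pstar a = 1)
    (hfeas : ∀ t : ℕ, (∑ a : R, Pstar a * (CV a (b t) + CT a (b t))) ≤ v)
    (T : ℕ) (hT : (1/ε)^3 ≤ (T:ℝ)) :
    (1/(T:ℝ)) * ∑ t ∈ Finset.Icc 1 T,
        ((∑ a : R, P t a * CR a) - (∑ a : R, Pstar a * CR a)) ≤
      ε * ((4*Θ^2 + v^2)/2 + (Fintype.card R : ℝ) * Θ^2 / 2 + 2*Θ + 1) := by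
  subst hαε hμε
  have hrun : IsPrimalDualRun (probSimplex R) (fun _ p ↦ ∑ a, p a * CR a)
      (fun n p ↦ (∑ a, p a * (CV a (b n) + CT a (b n))) - v) μ μ P (fun n ↦ lam (n + 1)) :=
    ⟨fun n ↦ hPmem (n + 1) n.succ_pos, fun n ↦ hPmin (n + 1) n.succ_pos,
      fun n ↦ hlam (n + 1) n.succ_pos⟩
  have hcost (n : ℕ) (a : R) : CV a (b n) + CT a (b n) ∈ Set.Icc 0 (2 * Θ) :=
    ⟨add_nonneg (hCV a _).1 (hCT a _).1, by linarith [(hCV a (b n)).2, (hCT a (b n)).2]⟩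
  have hT_sq : (1 / μ) ^ 2 ≤ (T : ℝ) :=
    (pow_le_pow_right₀ (one_le_one_div hμ hε1.le) (by norm_num)).trans hT
  have hregret := stmt13_general hrun hμ hlam1.ge
    (fun _ ↦ convexOn_sum_mul convex_probSimplex CR)
    (fun n ↦ (convexOn_sum_mul convex_probSimplex _).add_const (-v))
    (fun n ↦ sum_mul_sub_sq_le_of_mem_probSimplex (hrun.mem_succ n) (hcost n) hv.le)
    hPstar (fun n ↦ sub_nonpos.2 (hfeas n)) hT_sq
  have hdist : ‖Pstar - P 0‖ ^ 2 ≤ 2 := norm_sub_sq_le_two_of_mem_probSimplex hP0 hPstar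
  have hslack : 0 ≤ (Fintype.card R : ℝ) * Θ ^ 2 / 2 + 2 * Θ := by positivity
  rw [sum_Icc_one_eq_sum_range]
  refine hregret.trans (mul_le_mul_of_nonneg_left ?_ hμ.le)
  rw [zero_add, hlam1]
  linarith
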